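/- Let h : X → Y be a dominant morphism of k-varieties whose generic fibre X_η is irreducible. If X_η is retract rational over the function field k(Y) and Y is retract rational over k, then X is retract rational over k. -/

import Mathlib

open AlgebraicGeometry CategoryTheory CategoryTheory.Limits TopologicalSpace

universe u

attribute [local instance] MvPolynomial.gradedAlgebra

noncomputable def ProjSpace (k : Type u) [Field k] (N : ℕ) : Scheme.{u} :=
  Proj (MvPolynomial.homogeneousSubmodule (Fin (N + 1)) k)

noncomputable def ProjSpace.structMap (k : Type u) [Field k] (N : ℕ) :
    ProjSpace k N ⟶ Spec (CommRingCat.of k) :=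
  Proj.toSpecZero _ ≫ Spec.map (CommRingCat.ofHom
    ((GradedRing.projZeroRingHom' (MvPolynomial.homogeneousSubmodule (Fin (N + 1)) k)).comp
      (MvPolynomial.C : k →+* MvPolynomial (Fin (N + 1)) k)))

def AlgebraicGeometry.Scheme.PartialMap.CompEqId {X Y : Scheme.{u}}
    (f : X.PartialMap Y) (g : Y.PartialMap X) : Prop :=
  ∃ (U : X.Opens) (_ : Dense (U : Set X)) (hle : U ≤ f.domain)
    (lift : (U : Scheme.{u}) ⟶ (g.domain : Scheme.{u})),
      lift ≫ g.domain.ι = X.homOfLE hle ≫ f.hom ∧ lift ≫ g.hom = U.ι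

def AlgebraicGeometry.Scheme.PartialMap.IsOverStruct {X Y B : Scheme.{u}}
    (sX : X ⟶ B) (sY : Y ⟶ B) (f : X.PartialMap Y) : Prop :=
  f.hom ≫ sY = f.domain.ι ≫ sX

/-- A scheme `X` with structure morphism `sX` over a field `K` is retract rational if the
identity on `X` factors rationally through some projective space `ℙ^N_K`:  there are
rational (partial) maps `f : X ⤏ ℙ^N` and `g : ℙ^N ⤏ X` over `K` such that `g ∘ f` is
defined and agrees with the identity as a rational map. -/
def IsRetractRational (K : Type u) [Field K] (X : Scheme.{u})
    (sX : X ⟶ Spec (CommRingCat.of K)) : Prop :=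
  ∃ (N : ℕ), 1 ≤ N ∧
    ∃ (f : X.PartialMap (ProjSpace K N)) (g : (ProjSpace K N).PartialMap X),
      f.IsOverStruct sX (ProjSpace.structMap K N) ∧
      g.IsOverStruct (ProjSpace.structMap K N) sX ∧
      f.CompEqId g

/-- Base change of a `k`-scheme along a field extension `k → K`. -/
noncomputable def baseChange {k : Type u} [Field k] (K : Type u) [Field K] [Algebra k K]
    {X : Scheme.{u}} (sX : X ⟶ Spec (CommRingCat.of k)) : Scheme.{u} :=
  Limits.pullback sX (Spec.map (CommRingCat.ofHom (algebraMap k K)))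

/-- The structure morphism of the base change. -/
noncomputable def baseChangeStruct {k : Type u} [Field k] (K : Type u) [Field K] [Algebra k K]
    {X : Scheme.{u}} (sX : X ⟶ Spec (CommRingCat.of k)) :
    baseChange K sX ⟶ Spec (CommRingCat.of K) :=
  Limits.pullback.snd sX (Spec.map (CommRingCat.ofHom (algebraMap k K)))

/-- A `k`-scheme is geometrically retract rational if its base change to an algebraic
closure of `k` is retract rational. -/
def IsGeometricallyRetractRational (k : Type u) [Field k] (X : Scheme.{u})
    (sX : X ⟶ Spec (CommRingCat.of k)) : Prop :=
  IsRetractRational (AlgebraicClosure k) (baseChange (AlgebraicClosure k) sX)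
    (baseChangeStruct (AlgebraicClosure k) sX)

/-- The generic fibre of a morphism `h : X ⟶ Y` with `Y` irreducible:  the fibre of `h`
over the generic point of `Y`, a scheme over the function field `k(Y)`. -/
noncomputable def GenericFibre {X Y : Scheme.{u}} [IrreducibleSpace Y] (h : X ⟶ Y) :
    Scheme.{u} :=
  Limits.pullback h (Y.fromSpecStalk (genericPoint Y))

/-- The structure morphism of the generic fibre over `Spec k(Y)`. -/
noncomputable def GenericFibre.structMap {X Y : Scheme.{u}} [IrreducibleSpace Y]
    (h : X ⟶ Y) : GenericFibre h ⟶ Spec (CommRingCat.of (Y.functionField)) :=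
  Limits.pullback.snd h (Y.fromSpecStalk (genericPoint Y))

/-!
A variety over `k` is retract rational if and only if its function field `L` is, as a `k`-algebra, a
retract of the local ring of an affine space at some prime: rational maps are determined by, and
spread out from, morphisms of local schemes, and the composite `g ∘ f` is defined at the generic
point exactly when `f` maps it into the domain of `g`.

If `K` is a retract of `A_𝔭` for a polynomial ring `A` over `k`, and `L` is a retract of a
localization of `K[τ]`, then `L` is a retract of a localization of `A_𝔭[τ]`, hence of one of the
polynomial ring `A[τ]`. This is applied to `K = k(Y)` and `L = k(X)`, which is also the local ring
of the generic fibre at its generic point.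
-/

/-- The `k`-algebra `L` is a retract of the localization of the `k`-algebra `A` at some prime ideal.
Retract rationality of a variety is this property of its function field `L`, for `A` the coordinate
ring of an affine space. -/
def IsLocalRetract (k A L : Type*) [CommRing k] [CommRing A] [CommRing L] [Algebra k A]
    [Algebra k L] : Prop :=
  ∃ (p : Ideal A) (_ : p.IsPrime) (φ : L →ₐ[k] Localization.AtPrime p)
    (ψ : Localization.AtPrime p →ₐ[k] L), ψ.comp φ = AlgHom.id k L

namespace IsLocalRetract

variable {k K A B L : Type*} [CommRing k] [CommRing K] [CommRing A] [CommRing B] [CommRing L]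
  [Algebra k A] [Algebra k L]

lemma of_retract [Algebra k B] (h : IsLocalRetract k A L) (s : A →ₐ[k] B) (r : B →ₐ[k] A)
    (hrs : r.comp s = AlgHom.id k A) : IsLocalRetract k B L := by
  obtain ⟨p, hp, φ, ψ, hψφ⟩ := h
  have hq : p = (p.comap r).comap s := by
    change p = p.comap (r.comp s)
    rw [hrs]
    rfl
  have hloc : (Localization.localAlgHom (p.comap r) p r rfl).comp
      (Localization.localAlgHom p _ s hq) = AlgHom.id k (Localization.AtPrime p) :=
    AlgHom.coe_ringHom_injective <| IsLocalization.ringHom_ext p.primeCompl <|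
      RingHom.ext fun x ↦ by
        simpa [Localization.localRingHom_to_map] using
          congr(algebraMap A (Localization.AtPrime p) ($hrs x))
  refine ⟨p.comap r, inferInstance, (Localization.localAlgHom p _ s hq).comp φ,
    ψ.comp (Localization.localAlgHom (p.comap r) p r rfl), ?_⟩
  rw [AlgHom.comp_assoc, ← AlgHom.comp_assoc _ _ φ, hloc, AlgHom.id_comp, hψφ]

lemma restrictScalars [Algebra k K] [Algebra K A] [Algebra K L] [IsScalarTower k K A]
    [IsScalarTower k K L] (h : IsLocalRetract K A L) : IsLocalRetract k A L := by
  obtain ⟨p, hp, φ, ψ, hψφ⟩ := h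
  exact ⟨p, hp, φ.restrictScalars k, ψ.restrictScalars k, AlgHom.ext fun x ↦ congr($hψφ x)⟩

lemma of_isLocalization [Algebra k B] [Algebra A B] [IsScalarTower k A B] (M : Submonoid A)
    [IsLocalization M B] (h : IsLocalRetract k B L) : IsLocalRetract k A L := by
  obtain ⟨p, hp, φ, ψ, hψφ⟩ := h
  have := IsLocalization.isLocalization_isLocalization_atPrime_isLocalization M
    (Localization.AtPrime p) p
  let e : Localization.AtPrime p ≃ₐ[k] Localization.AtPrime (p.comap (algebraMap A B)) :=
    (IsLocalization.algEquiv (p.comap (algebraMap A B)).primeCompl _ _).restrictScalars k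
  exact ⟨p.comap (algebraMap A B), inferInstance, (e : _ →ₐ[k] _).comp φ,
    ψ.comp (e.symm : _ →ₐ[k] _), AlgHom.ext fun x ↦ by simpa using congr($hψφ x)⟩

attribute [local instance] MvPolynomial.algebraMvPolynomial in
lemma trans_mvPolynomial {σ τ : Type*} [Algebra k K] [Algebra K L] [IsScalarTower k K L]
    (hK : IsLocalRetract k (MvPolynomial σ k) K) (hL : IsLocalRetract K (MvPolynomial τ K) L) :
    IsLocalRetract k (MvPolynomial (τ ⊕ σ) k) L := by
  obtain ⟨p, hp, φ, ψ, hψφ⟩ := hK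
  have hloc : IsLocalRetract k (MvPolynomial τ (Localization.AtPrime p)) L :=
    (hL.restrictScalars (k := k)).of_retract (MvPolynomial.mapAlgHom φ) (MvPolynomial.mapAlgHom ψ)
      (by
        ext x
        · simpa using congr(MvPolynomial.coeff _ (MvPolynomial.C $(congr($hψφ x))))
        · simp)
  have : IsScalarTower k (MvPolynomial τ (MvPolynomial σ k))
      (MvPolynomial τ (Localization.AtPrime p)) :=
    .of_algebraMap_eq' (MvPolynomial.mapAlgHom
      (IsScalarTower.toAlgHom k (MvPolynomial σ k) (Localization.AtPrime p))).comp_algebraMap.symm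
  have hpoly : IsLocalRetract k (MvPolynomial τ (MvPolynomial σ k)) L :=
    hloc.of_isLocalization (p.primeCompl.map (MvPolynomial.C (σ := τ)))
  exact hpoly.of_retract (MvPolynomial.sumAlgEquiv k τ σ).symm (MvPolynomial.sumAlgEquiv k τ σ)
    (by ext <;> simp)

end IsLocalRetract

namespace ProjSpace

section StandardChart

open MvPolynomial HomogeneousLocalization

variable {k : Type u} [Field k] {N : ℕ} (i : Fin (N + 1))

/-- The `k`-algebra structure on the ring `k[X₀, …, X_N]_(Xᵢ)` of degree zero fractions. -/
noncomputable def constHom : k →+* Away (homogeneousSubmodule (Fin (N + 1)) k) (X i) :=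
  (fromZeroRingHom _ _).comp
    ((GradedRing.projZeroRingHom' (homogeneousSubmodule (Fin (N + 1)) k)).comp C)

/-- The affine coordinate `Xⱼ / Xᵢ` on the standard chart `Xᵢ ≠ 0` of projective space. -/
noncomputable def coord (j : Fin (N + 1)) : Away (homogeneousSubmodule (Fin (N + 1)) k) (X i) :=
  Away.mk _ (d := 1) (isHomogeneous_X k i) 1 (X j) (isHomogeneous_X k j)

/-- The map `f / Xᵢⁿ ↦ f(x₀, …, 1, …, x_{N-1})` with `1` in the `i`-th place. -/
noncomputable def dehomogenize :
    Away (homogeneousSubmodule (Fin (N + 1)) k) (X i) →+* MvPolynomial (Fin N) k :=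
  (IsLocalization.Away.lift (S := Localization.Away (X i : MvPolynomial (Fin (N + 1)) k)) (X i)
    (g := (aeval (R := k) (i.insertNth 1 X)).toRingHom) (by simp)).comp
    (algebraMap _ (Localization.Away (X i : MvPolynomial (Fin (N + 1)) k)))

lemma val_constHom (a : k) :
    (constHom i a).val = algebraMap _ _ (C a : MvPolynomial (Fin (N + 1)) k) := by
  change Localization.mk _ _ = _
  rw [← Localization.mk_one_eq_algebraMap]
  congr 1
  exact DirectSum.decompose_of_mem_same _ (isHomogeneous_C _ a)

lemma val_coord (j : Fin (N + 1)) :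
    (coord (k := k) i j).val = Localization.mk (X j) ⟨X i, Submonoid.mem_powers _⟩ :=
  (Away.val_mk _ _ _ _ _).trans (by simp)

lemma coord_self : coord (k := k) i i = 1 := by
  ext
  rw [val_coord, val_one]
  exact Localization.mk_self
    (⟨X i, Submonoid.mem_powers _⟩ : Submonoid.powers (X i : MvPolynomial (Fin (N + 1)) k))

lemma val_eval₂_coord {f : MvPolynomial (Fin (N + 1)) k} {n : ℕ} (hf : f.IsHomogeneous n) :
    (eval₂ (constHom i) (coord i) f).val =
      Localization.mk f ⟨X i ^ n, pow_mem (Submonoid.mem_powers _) n⟩ := by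
  let u : Localization.Away (X i : MvPolynomial (Fin (N + 1)) k) :=
    Localization.mk 1 ⟨X i, Submonoid.mem_powers _⟩
  have hcoord (j) : (coord i j).val = algebraMap (MvPolynomial (Fin (N + 1)) k) _ (X j) * u := by
    rw [val_coord, ← Localization.mk_one_eq_algebraMap, Localization.mk_mul]
    simp
  have hmk : Localization.mk f ⟨X i ^ n, pow_mem (Submonoid.mem_powers _) n⟩ =
      algebraMap (MvPolynomial (Fin (N + 1)) k) _ f * u ^ n := by
    rw [← Localization.mk_one_eq_algebraMap, Localization.mk_pow, Localization.mk_mul]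
    simp
  rw [hmk, ← HomogeneousLocalization.algebraMap_apply, eval₂_eq, map_sum]
  conv_rhs => rw [f.as_sum, map_sum, Finset.sum_mul]
  refine Finset.sum_congr rfl fun d hd ↦ ?_
  have hdeg : ∑ j ∈ d.support, d j = n := by
    have := hf (mem_support_iff.mp hd)
    rw [← Finsupp.degree_apply, Finsupp.degree_eq_weight_one]
    exact this
  simp only [map_mul, map_prod, map_pow, HomogeneousLocalization.algebraMap_apply, hcoord,
    val_constHom, mul_pow, Finset.prod_mul_distrib, Finset.prod_pow_eq_pow_sum, hdeg]
  rw [monomial_eq, map_mul, Finsupp.prod, map_prod]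
  simp only [map_pow, mul_assoc]

lemma dehomogenize_eq_aeval {x : Away (homogeneousSubmodule (Fin (N + 1)) k) (X i)}
    {f : MvPolynomial (Fin (N + 1)) k} {n : ℕ}
    (hx : x.val = Localization.mk f ⟨X i ^ n, pow_mem (Submonoid.mem_powers _) n⟩) :
    dehomogenize i x = aeval (i.insertNth 1 X) f := by
  simp [dehomogenize, hx, Localization.mk_eq_mk'_apply, IsLocalization.Away.lift,
    IsLocalization.lift_mk'_spec]

lemma dehomogenize_coord (j : Fin (N + 1)) :
    dehomogenize (k := k) i (coord i j) =
      i.insertNth (α := fun _ ↦ MvPolynomial (Fin N) k) 1 X j := by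
  rw [dehomogenize_eq_aeval i (f := X j) (n := 1), aeval_X]
  simp [val_coord]

lemma dehomogenize_constHom (a : k) : dehomogenize i (constHom i a) = C a := by
  rw [dehomogenize_eq_aeval i (f := C a) (n := 0), aeval_C, MvPolynomial.algebraMap_eq]
  simp only [val_constHom, pow_zero]
  exact (Localization.mk_one_eq_algebraMap _).symm

lemma eval₂_coord_aeval_insertNth (f : MvPolynomial (Fin (N + 1)) k) :
    eval₂ (constHom i) (fun j ↦ coord i (i.succAbove j)) (aeval (i.insertNth 1 X) f) =
      eval₂ (constHom i) (coord i) f := by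
  suffices (eval₂Hom (constHom i) fun j ↦ coord i (i.succAbove j)).comp
      (aeval (R := k) (i.insertNth 1 X)).toRingHom = eval₂Hom (constHom i) (coord i) from
    congr($this f)
  refine ringHom_ext (by simp) fun j ↦ ?_
  obtain rfl | ⟨j, rfl⟩ := Fin.eq_self_or_eq_succAbove i j <;> simp [coord_self]

lemma eval₂_coord_dehomogenize (x : Away (homogeneousSubmodule (Fin (N + 1)) k) (X i)) :
    eval₂ (constHom i) (fun j ↦ coord i (i.succAbove j)) (dehomogenize i x) = x := by
  obtain ⟨n, f, hf, rfl⟩ := Away.mk_surjective _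
    ((mem_homogeneousSubmodule 1 _).mpr (isHomogeneous_X k i)) x
  apply val_injective
  rw [dehomogenize_eq_aeval _ (Away.val_mk _ _ _ _ _), eval₂_coord_aeval_insertNth,
    val_eval₂_coord i (by simpa using hf : f.IsHomogeneous n)]
  rfl

/-- The coordinate ring of the standard chart `Xᵢ ≠ 0` of projective space is a polynomial ring in
the affine coordinates `Xⱼ / Xᵢ`, `j ≠ i`. -/
noncomputable def chartEquiv :
    Away (homogeneousSubmodule (Fin (N + 1)) k) (X i) ≃+* MvPolynomial (Fin N) k :=
  RingEquiv.ofRingHom (dehomogenize i) (eval₂Hom (constHom i) fun j ↦ coord i (i.succAbove j))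
    (by ext <;> simp [dehomogenize_constHom, dehomogenize_coord])
    (RingHom.ext (eval₂_coord_dehomogenize i))

lemma chartEquiv_comp_constHom :
    (chartEquiv i).toRingHom.comp (constHom (k := k) i) = C :=
  RingHom.ext (dehomogenize_constHom i)

end StandardChart

section Geometry

open MvPolynomial

variable (k : Type u) [Field k] (N : ℕ)

/-- The locus `f ≠ 0` in projective space. -/
noncomputable def basicOpen (f : MvPolynomial (Fin (N + 1)) k) : (ProjSpace k N).Opens :=
  Proj.basicOpen (homogeneousSubmodule (Fin (N + 1)) k) f

/-- The open immersion of the locus `Xᵢ ≠ 0` into projective space. -/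
noncomputable def awayι (i : Fin (N + 1)) :
    Spec (.of (HomogeneousLocalization.Away (homogeneousSubmodule (Fin (N + 1)) k) (X i))) ⟶
      ProjSpace k N :=
  Proj.awayι _ (X i) ((mem_homogeneousSubmodule 1 _).mpr (isHomogeneous_X k i)) one_pos

instance (i : Fin (N + 1)) : IsOpenImmersion (awayι k N i) :=
  inferInstanceAs (IsOpenImmersion (Proj.awayι _ _ _ _))

lemma opensRange_awayι (i : Fin (N + 1)) : (awayι k N i).opensRange = basicOpen k N (X i) :=
  Proj.opensRange_awayι _ _ _ _

lemma awayι_structMap (i : Fin (N + 1)) :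
    awayι k N i ≫ structMap k N = Spec.map (CommRingCat.ofHom (constHom i)) :=
  (Proj.awayι_toSpecZero_assoc _ _ _ _ _).trans (Spec.map_comp _ _).symm

/-- The standard chart `Xᵢ ≠ 0` of projective space, as an open immersion of affine space. -/
noncomputable def chart (i : Fin (N + 1)) :
    Spec (.of (MvPolynomial (Fin N) k)) ⟶ ProjSpace k N :=
  Spec.map (CommRingCat.ofHom (chartEquiv (k := k) i).toRingHom) ≫ awayι k N i

instance (i : Fin (N + 1)) : IsIso (CommRingCat.ofHom (chartEquiv (k := k) (N := N) i).toRingHom) :=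
  (ConcreteCategory.isIso_iff_bijective _).mpr (chartEquiv i).bijective

instance (i : Fin (N + 1)) : IsOpenImmersion (chart k N i) :=
  inferInstanceAs (IsOpenImmersion (Spec.map _ ≫ awayι k N i))

lemma opensRange_chart (i : Fin (N + 1)) : (chart k N i).opensRange = basicOpen k N (X i) :=
  (Scheme.Hom.opensRange_comp_of_isIso _ _).trans (opensRange_awayι k N i)

lemma chart_structMap (i : Fin (N + 1)) :
    chart k N i ≫ structMap k N = Spec.map (CommRingCat.ofHom C) := by
  rw [chart, Category.assoc, awayι_structMap, ← Spec.map_comp, ← CommRingCat.ofHom_comp,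
    chartEquiv_comp_constHom]

lemma iSup_basicOpen_X : ⨆ i, basicOpen k N (X i) = ⊤ := by
  refine Proj.iSup_basicOpen_eq_top' (homogeneousSubmodule (Fin (N + 1)) k) X
    (fun i ↦ ⟨1, (mem_homogeneousSubmodule 1 _).mpr (isHomogeneous_X k i)⟩)
    (eq_top_iff.mpr ?_)
  rintro f -
  induction f using MvPolynomial.induction_on with
  | C a =>
    exact Subalgebra.algebraMap_mem (R := homogeneousSubmodule (Fin (N + 1)) k 0) _
      ⟨_, (mem_homogeneousSubmodule 0 _).mpr (isHomogeneous_C _ a)⟩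
  | add p q hp hq => exact add_mem hp hq
  | mul_X p i hp => exact mul_mem hp (Algebra.subset_adjoin ⟨i, rfl⟩)

lemma exists_chart_eq (x : ProjSpace k N) : ∃ i y, chart k N i y = x := by
  obtain ⟨i, hi⟩ := Opens.mem_iSup.mp ((iSup_basicOpen_X k N).ge (Set.mem_univ x))
  rw [← opensRange_chart] at hi
  exact ⟨i, hi⟩

/-- The standard cover of projective space by affine spaces. -/
noncomputable def chartCover : (ProjSpace k N).AffineOpenCover where
  I₀ := Fin (N + 1)
  X _ := .of (MvPolynomial (Fin N) k)
  f := chart k N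
  idx x := (exists_chart_eq k N x).choose
  covers x := (exists_chart_eq k N x).choose_spec

lemma locallyOfFiniteType_chart_structMap (i : Fin (N + 1)) :
    LocallyOfFiniteType (chart k N i ≫ structMap k N) := by
  rw [chart_structMap, HasRingHomProperty.Spec_iff (P := @LocallyOfFiniteType)]
  exact RingHom.finiteType_algebraMap.mpr
    (inferInstanceAs (Algebra.FiniteType k (MvPolynomial _ k)))

instance : LocallyOfFiniteType (structMap k N) := by
  have (i : _) : IsAffine ((chartCover k N).openCover.X i) := inferInstanceAs (IsAffine (Spec _))
  exact HasRingHomProperty.of_source_openCover (P := @LocallyOfFiniteType)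
    (chartCover k N).openCover fun i ↦
      HasRingHomProperty.appTop _ _ (locallyOfFiniteType_chart_structMap k N i)

variable {k N} in
lemma basicOpen_nonempty {f : MvPolynomial (Fin (N + 1)) k} (hf : f ≠ 0) {n : ℕ}
    (hfn : f.IsHomogeneous n) (hn : 0 < n) : (basicOpen k N f : Set (ProjSpace k N)).Nonempty := by
  have : IsDomain (Localization.Away f) :=
    IsLocalization.isDomain_localization (powers_le_nonZeroDivisors_of_noZeroDivisors hf)
  have : Nontrivial (HomogeneousLocalization.Away (homogeneousSubmodule (Fin (N + 1)) k) f) :=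
    (algebraMap _ (Localization.Away f)).domain_nontrivial
  let ι : Spec (.of (HomogeneousLocalization.Away (homogeneousSubmodule (Fin (N + 1)) k) f)) ⟶
      ProjSpace k N := Proj.awayι _ f ((mem_homogeneousSubmodule n f).mpr hfn) hn
  have : IsOpenImmersion ι := inferInstanceAs (IsOpenImmersion (Proj.awayι _ _ _ _))
  have hι : ι.opensRange = basicOpen k N f := Proj.opensRange_awayι _ _ _ _
  exact hι ▸ Set.range_nonempty ι

lemma not_disjoint_basicOpen_X (i j : Fin (N + 1)) :
    ¬ Disjoint (basicOpen k N (X i)) (basicOpen k N (X j)) := by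
  have hne := basicOpen_nonempty (mul_ne_zero (X_ne_zero (R := k) i) (X_ne_zero j))
    ((isHomogeneous_X k i).mul (isHomogeneous_X k j)) two_pos
  have hmul : basicOpen k N (X i * X j) = basicOpen k N (X i) ⊓ basicOpen k N (X j) :=
    Proj.basicOpen_mul _ _ _
  rw [disjoint_iff, ← hmul, ← Opens.coe_eq_empty]
  exact hne.ne_empty

instance : IrreducibleSpace (ProjSpace k N) where
  toPreirreducibleSpace := .of_isOpenCover (U := fun i ↦ basicOpen k N (X i))
    (fun i j _ ↦ not_disjoint_basicOpen_X k N i j) (iSup_basicOpen_X k N)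
    fun i ↦ opensRange_chart k N i ▸
      (chart k N i).isoOpensRange.hom.surjective.preirreducibleSpace
        (chart k N i).isoOpensRange.hom.continuous
  toNonempty := ⟨chart k N 0 (Classical.arbitrary (PrimeSpectrum (MvPolynomial (Fin N) k)))⟩

end Geometry

end ProjSpace

section LocalSchemes

variable {X Z P S B : Scheme.{u}}

lemma exists_specMap_fromSpecStalk {R : CommRingCat.{u}} [IsLocalRing R] {x : X} (f : Spec R ⟶ X)
    (hf : f (IsLocalRing.closedPoint R) = x) :
    ∃ φ : X.presheaf.stalk x ⟶ R, IsLocalHom φ.hom ∧ Spec.map φ ≫ X.fromSpecStalk x = f := by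
  subst hf
  exact ⟨_, inferInstance, Scheme.Spec_stalkClosedPointTo_fromSpecStalk f⟩

lemma fromSpecStalkOfMem_closedPoint (U : X.Opens) {x : X} (hx : x ∈ U) :
    U.fromSpecStalkOfMem x hx (IsLocalRing.closedPoint _) = ⟨x, hx⟩ := by
  exact U.ι.injective
    (congr($(Scheme.Opens.fromSpecStalkOfMem_ι U x hx) _).trans Scheme.fromSpecStalk_closedPoint)

/-- The local scheme `Spec 𝒪_{X, x}` of a `B`-scheme `X` with structure morphism `sX`, as a
scheme over `B`. -/
noncomputable abbrev localSchemeOver (sX : X ⟶ B) (x : X) : Over B :=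
  Over.mk (X.fromSpecStalk x ≫ sX)

lemma exists_retract_localSchemeOver_of_compEqId {f : Z.PartialMap P} {g : P.PartialMap Z}
    (hfg : f.CompEqId g) {sZ : Z ⟶ B} {sP : P ⟶ B} (hg : g.IsOverStruct sP sZ) {z : Z}
    (hz : ∀ U : Z.Opens, Dense (U : Set Z) → z ∈ U) :
    ∃ p : P, Nonempty (Retract (localSchemeOver sZ z) (localSchemeOver sP p)) := by
  obtain ⟨U, hU, hle, lift, -, hlift⟩ := hfg
  have hzU : z ∈ U := hz U hU
  let a : Spec (Z.presheaf.stalk z) ⟶ g.domain := U.fromSpecStalkOfMem z hzU ≫ lift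
  have ha : a ≫ g.hom = Z.fromSpecStalk z := by simp [a, hlift]
  let p : g.domain := a (IsLocalRing.closedPoint _)
  let b : Spec (P.presheaf.stalk p.1) ⟶ g.domain := g.domain.fromSpecStalkOfMem p.1 p.2
  obtain ⟨ψ, hψ_local, hψ⟩ := exists_specMap_fromSpecStalk (x := p.1) (a ≫ g.domain.ι) rfl
  have hψb : Spec.map ψ ≫ b = a := by
    rw [← cancel_mono g.domain.ι, Category.assoc, Scheme.Opens.fromSpecStalkOfMem_ι, hψ]
  have hclosed : (b ≫ g.hom) (IsLocalRing.closedPoint _) = z := by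
    rw [← IsLocalRing.comap_closedPoint ψ.hom]
    change (Spec.map ψ ≫ b ≫ g.hom) (IsLocalRing.closedPoint _) = z
    rw [reassoc_of% hψb, ha, Scheme.fromSpecStalk_closedPoint]
  obtain ⟨φ, -, hφ⟩ := exists_specMap_fromSpecStalk (b ≫ g.hom) hclosed
  have hφψ : Spec.map ψ ≫ Spec.map φ = 𝟙 _ := by
    rw [← cancel_mono (Z.fromSpecStalk z), Category.assoc, hφ, reassoc_of% hψb, ha,
      Category.id_comp]
  have hφ_over : Spec.map φ ≫ Z.fromSpecStalk z ≫ sZ = P.fromSpecStalk p.1 ≫ sP := by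
    rw [reassoc_of% hφ, hg, Scheme.Opens.fromSpecStalkOfMem_ι_assoc]
  exact ⟨p.1, ⟨{
    i := Over.homMk (Spec.map ψ) (by
      change Spec.map ψ ≫ P.fromSpecStalk p.1 ≫ sP = Z.fromSpecStalk z ≫ sZ
      rw [← hφ_over, reassoc_of% hφψ])
    r := Over.homMk (Spec.map φ) hφ_over
    retract := Over.OverMorphism.ext hφψ }⟩⟩

lemma compEqId_of_fromSpecStalkOfMem [IrreducibleSpace X] {x : X} [X.IsGermInjectiveAt x]
    {f : X.PartialMap P} {g : P.PartialMap X} (hx : x ∈ f.domain)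
    (a : Spec (X.presheaf.stalk x) ⟶ g.domain) (haf : a ≫ g.domain.ι = f.fromSpecStalkOfMem hx)
    (hag : a ≫ g.hom = X.fromSpecStalk x) : f.CompEqId g := by
  let V : X.Opens := f.domain.ι ''ᵁ (f.hom ⁻¹ᵁ g.domain)
  have hVf : V ≤ f.domain := by
    rintro _ ⟨y, -, rfl⟩
    exact y.2
  have hxV : x ∈ V := by
    refine ⟨⟨x, hx⟩, ?_, rfl⟩
    change f.hom ⟨x, hx⟩ ∈ g.domain
    rw [← fromSpecStalkOfMem_closedPoint f.domain hx]
    change f.fromSpecStalkOfMem hx _ ∈ g.domain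
    rw [← haf]
    exact (a (IsLocalRing.closedPoint _)).2
  have hV : Dense (V : Set X) := V.2.dense ⟨x, hxV⟩
  let l : V.toScheme ⟶ g.domain := IsOpenImmersion.lift g.domain.ι (f.restrict V hV hVf).hom (by
    rintro _ ⟨⟨_, y, hy, rfl⟩, rfl⟩
    rw [Scheme.Opens.range_ι]
    have hVy : X.homOfLE hVf ⟨f.domain.ι y, y, hy, rfl⟩ = y :=
      Subtype.ext (Scheme.homOfLE_apply ..)
    change f.hom (X.homOfLE hVf ⟨f.domain.ι y, y, hy, rfl⟩) ∈ g.domain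
    rw [hVy]
    exact hy)
  have hl : l ≫ g.domain.ι = (f.restrict V hV hVf).hom := IsOpenImmersion.lift_fac _ _ _
  have hla : V.fromSpecStalkOfMem x hxV ≫ l = a := by
    rw [← cancel_mono g.domain.ι, Category.assoc, hl, haf]
    exact f.fromSpecStalkOfMem_restrict hV hVf hxV
  obtain ⟨W, hW, hWV, hWV', heq⟩ := Scheme.PartialMap.equiv_of_fromSpecStalkOfMem_eq
    ⟨V, hV, l ≫ g.hom⟩ ⟨V, hV, V.ι⟩ hxV hxV (by
      simp [Scheme.PartialMap.fromSpecStalkOfMem, reassoc_of% hla, hag])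
  refine ⟨W, hW, hWV.trans hVf, X.homOfLE hWV ≫ l, ?_, ?_⟩
  · rw [Category.assoc, hl]
    simp
  · exact (Category.assoc _ _ _).trans (heq.trans (X.homOfLE_ι hWV'))

lemma exists_compEqId_of_retract [IrreducibleSpace X] [IrreducibleSpace P] {x : X} {p : P}
    [X.IsGermInjectiveAt x] [P.IsGermInjectiveAt p] {sX : X ⟶ B} {sP : P ⟶ B}
    [LocallyOfFiniteType sX] [LocallyOfFiniteType sP]
    (ρ : Retract (localSchemeOver sX x) (localSchemeOver sP p)) :
    ∃ (f : X.PartialMap P) (g : P.PartialMap X),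
      f.IsOverStruct sX sP ∧ g.IsOverStruct sP sX ∧ f.CompEqId g := by
  have hi : (ρ.i.left ≫ P.fromSpecStalk p) ≫ sP = X.fromSpecStalk x ≫ sX :=
    (Category.assoc _ _ _).trans (Over.w ρ.i)
  have hr : (ρ.r.left ≫ X.fromSpecStalk x) ≫ sX = P.fromSpecStalk p ≫ sP :=
    (Category.assoc _ _ _).trans (Over.w ρ.r)
  have hir : ρ.i.left ≫ ρ.r.left = 𝟙 _ := congr(($(ρ.retract)).left)
  let f := Scheme.PartialMap.ofFromSpecStalk sX sP _ hi
  let g := Scheme.PartialMap.ofFromSpecStalk sP sX _ hr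
  have hp : p ∈ g.domain := Scheme.PartialMap.mem_domain_ofFromSpecStalk sP sX _ hr
  have hg : g.fromSpecStalkOfMem hp = ρ.r.left ≫ X.fromSpecStalk x :=
    Scheme.PartialMap.fromSpecStalkOfMem_ofFromSpecStalk sP sX _ hr
  refine ⟨f, g, Scheme.PartialMap.ofFromSpecStalk_comp sX sP _ hi,
    Scheme.PartialMap.ofFromSpecStalk_comp sP sX _ hr,
    compEqId_of_fromSpecStalkOfMem (Scheme.PartialMap.mem_domain_ofFromSpecStalk sX sP _ hi)
      (ρ.i.left ≫ g.domain.fromSpecStalkOfMem p hp) ?_ ?_⟩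
  · rw [Category.assoc, Scheme.Opens.fromSpecStalkOfMem_ι]
    exact (Scheme.PartialMap.fromSpecStalkOfMem_ofFromSpecStalk sX sP _ hi).symm
  · rw [Category.assoc]
    exact (congr(ρ.i.left ≫ $hg)).trans (by rw [reassoc_of% hir])

/-- An open immersion identifies the local scheme of its source at a point with that of its target
at the image point. -/
noncomputable def localSchemeOverIsoOfIsOpenImmersion (c : S ⟶ P) [IsOpenImmersion c] (sP : P ⟶ B)
    (q : S) : localSchemeOver (c ≫ sP) q ≅ localSchemeOver sP (c q) :=
  Over.isoMk (Scheme.Spec.mapIso (asIso (c.stalkMap q)).op) (by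
    change Spec.map (c.stalkMap q) ≫ P.fromSpecStalk (c q) ≫ sP = _
    rw [Scheme.SpecMap_stalkMap_fromSpecStalk_assoc]
    rfl)

/-- The spectrum of a `k`-algebra, as a scheme over `Spec k`. -/
noncomputable abbrev specOver (k A : Type u) [CommRing k] [CommRing A] [Algebra k A] :
    Over (Spec (.of k)) :=
  (algSpec (.of k)).obj (.op (.of k A))

lemma specMap_stalkIso_hom_fromSpecStalk {A : Type u} [CommRing A] (q : PrimeSpectrum A) :
    Spec.map (Spec.stalkIso (.of A) q).hom ≫ (Spec (.of A)).fromSpecStalk q =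
      Spec.map (CommRingCat.ofHom (algebraMap A (Localization.AtPrime q.asIdeal))) := by
  let x : Spec (.of A) := q
  let e : (Spec (.of A)).presheaf.stalk x ≅ .of (Localization.AtPrime q.asIdeal) :=
    Spec.stalkIso (.of A) x
  change Spec.map e.hom ≫ (Spec (.of A)).fromSpecStalk x = _
  rw [Spec.fromSpecStalk_eq]
  exact (Spec.map_comp _ _).symm.trans
    congr(Spec.map $(((Iso.comp_inv_eq e).mp (Spec.algebraMap_stalkIso_inv x)).symm))

/-- The local scheme of `Spec A` at a prime is the spectrum of the localization of `A` at that
prime, over `k`. -/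
noncomputable def localSchemeOverSpecIso (k : Type u) {A : Type u} [CommRing k] [CommRing A]
    [Algebra k A] (q : PrimeSpectrum A) :
    localSchemeOver (specOver k A).hom q ≅ specOver k (Localization.AtPrime q.asIdeal) :=
  (Over.isoMk (Scheme.Spec.mapIso (Spec.stalkIso (.of A) q).op) <|
    (Category.assoc _ _ _).symm.trans <|
      congr($(specMap_stalkIso_hom_fromSpecStalk q) ≫ (specOver k A).hom).trans <|
        Over.w ((algSpec (.of k)).map
          (CommAlgCat.ofHom (IsScalarTower.toAlgHom k A (Localization.AtPrime q.asIdeal))).op)).symm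

lemma nonempty_retract_specOver_iff {k A L : Type u} [CommRing k] [CommRing A] [CommRing L]
    [Algebra k A] [Algebra k L] :
    Nonempty (Retract (specOver k L) (specOver k A)) ↔
      ∃ (φ : L →ₐ[k] A) (ψ : A →ₐ[k] L), ψ.comp φ = AlgHom.id k L := by
  constructor
  · rintro ⟨ρ⟩
    have hρ : algSpec.fullyFaithful.preimage ρ.i ≫ algSpec.fullyFaithful.preimage ρ.r = 𝟙 _ :=
      algSpec.fullyFaithful.map_injective (by simp)
    exact ⟨(algSpec.fullyFaithful.preimage ρ.r).unop.hom,
      (algSpec.fullyFaithful.preimage ρ.i).unop.hom, congr(($hρ).unop.hom)⟩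
  · rintro ⟨φ, ψ, hψφ⟩
    let ρ : Retract (CommAlgCat.of k L) (CommAlgCat.of k A) :=
      { i := CommAlgCat.ofHom φ
        r := CommAlgCat.ofHom ψ
        retract := CommAlgCat.hom_ext hψφ }
    exact ⟨ρ.op.map (algSpec (.of k))⟩

lemma isLocalRetract_iff_exists_retract {k A L : Type u} [CommRing k] [CommRing A] [CommRing L]
    [Algebra k A] [Algebra k L] :
    IsLocalRetract k A L ↔ ∃ q : Spec (.of A),
      Nonempty (Retract (specOver k L) (localSchemeOver (specOver k A).hom q)) := by
  constructor
  · rintro ⟨p, hp, hφψ⟩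
    obtain ⟨ρ⟩ := nonempty_retract_specOver_iff.mpr hφψ
    exact ⟨_, ⟨ρ.trans (.ofIso (localSchemeOverSpecIso k ⟨p, hp⟩).symm)⟩⟩
  · rintro ⟨q, ⟨ρ⟩⟩
    exact ⟨q.asIdeal, q.isPrime,
      nonempty_retract_specOver_iff.mp ⟨ρ.trans (.ofIso (localSchemeOverSpecIso k q))⟩⟩

lemma nonempty_retract_localSchemeOver_of_mono (p : Z ⟶ X) [Mono p] (sZ : Z ⟶ B) {x : X}
    (j : Spec (X.presheaf.stalk x) ⟶ Z) (hj : j ≫ p = X.fromSpecStalk x) :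
    Nonempty (Retract (Over.mk (j ≫ sZ))
      (localSchemeOver sZ (j (IsLocalRing.closedPoint _)))) := by
  obtain ⟨φ, -, hφ⟩ := exists_specMap_fromSpecStalk j rfl
  obtain ⟨ψ, -, hψ⟩ := exists_specMap_fromSpecStalk
    (Z.fromSpecStalk (j (IsLocalRing.closedPoint _)) ≫ p) (x := x) (by
      have hz : p (j (IsLocalRing.closedPoint _)) = x :=
        congr($hj _).trans Scheme.fromSpecStalk_closedPoint
      exact congr(p $(Scheme.fromSpecStalk_closedPoint)).trans hz)
  have hψj : Spec.map ψ ≫ j = Z.fromSpecStalk _ := by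
    rw [← cancel_mono p, Category.assoc, hj, hψ]
  refine ⟨{
    i := Over.homMk (Spec.map φ) (by
      change Spec.map φ ≫ Z.fromSpecStalk _ ≫ sZ = j ≫ sZ
      rw [reassoc_of% hφ])
    r := Over.homMk (Spec.map ψ) (by
      change Spec.map ψ ≫ j ≫ sZ = Z.fromSpecStalk _ ≫ sZ
      rw [reassoc_of% hψj])
    retract := Over.OverMorphism.ext ?_ }⟩
  change Spec.map φ ≫ Spec.map ψ = 𝟙 _
  rw [← cancel_mono (X.fromSpecStalk x), Category.assoc, hψ, reassoc_of% hφ, hj, Category.id_comp]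

end LocalSchemes

section RetractRational

variable {K L : Type u} [Field K] [CommRing L] [Algebra K L] {X : Scheme.{u}}
  {sX : X ⟶ Spec (.of K)} {x : X}

lemma IsRetractRational.exists_isLocalRetract (hX : IsRetractRational K X sX)
    (hx : ∀ U : X.Opens, Dense (U : Set X) → x ∈ U)
    (ρ : Retract (specOver K L) (localSchemeOver sX x)) :
    ∃ n, 1 ≤ n ∧ IsLocalRetract K (MvPolynomial (Fin n) K) L := by
  obtain ⟨n, hn, f, g, -, hg, hfg⟩ := hX
  obtain ⟨p, ⟨ρp⟩⟩ := exists_retract_localSchemeOver_of_compEqId hfg hg hx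
  obtain ⟨i, q, rfl⟩ := ProjSpace.exists_chart_eq K n p
  have e := localSchemeOverIsoOfIsOpenImmersion (ProjSpace.chart K n i) (ProjSpace.structMap K n) q
  rw [ProjSpace.chart_structMap] at e
  exact ⟨n, hn, isLocalRetract_iff_exists_retract.mpr ⟨q, ⟨(ρ.trans ρp).trans (.ofIso e.symm)⟩⟩⟩

lemma IsRetractRational.of_isLocalRetract [IrreducibleSpace X] [LocallyOfFiniteType sX] {n : ℕ}
    (hn : 1 ≤ n) (hL : IsLocalRetract K (MvPolynomial (Fin n) K) L)
    (ρ : Retract (localSchemeOver sX x) (specOver K L)) : IsRetractRational K X sX := by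
  obtain ⟨q, ⟨ρq⟩⟩ := isLocalRetract_iff_exists_retract.mp hL
  have e := localSchemeOverIsoOfIsOpenImmersion (ProjSpace.chart K n 0) (ProjSpace.structMap K n) q
  rw [ProjSpace.chart_structMap] at e
  have : IsLocallyNoetherian X := LocallyOfFiniteType.isLocallyNoetherian sX
  have : IsLocallyNoetherian (ProjSpace K n) :=
    LocallyOfFiniteType.isLocallyNoetherian (ProjSpace.structMap K n)
  exact ⟨n, hn, exists_compEqId_of_retract ((ρ.trans ρq).trans (.ofIso e))⟩

lemma IsRetractRational.of_tower {k : Type u} [Field k] [Algebra k K] [Algebra k L]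
    [IsScalarTower k K L] {Y Z : Scheme.{u}} {sY : Y ⟶ Spec (.of k)} {sZ : Z ⟶ Spec (.of K)}
    {sX : X ⟶ Spec (.of k)} [IrreducibleSpace X] [LocallyOfFiniteType sX]
    (hY : IsRetractRational k Y sY) (hZ : IsRetractRational K Z sZ) {y : Y} {z : Z}
    (hy : ∀ U : Y.Opens, Dense (U : Set Y) → y ∈ U)
    (hz : ∀ U : Z.Opens, Dense (U : Set Z) → z ∈ U)
    (ρY : Retract (specOver k K) (localSchemeOver sY y))
    (ρZ : Retract (specOver K L) (localSchemeOver sZ z))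
    (ρX : Retract (localSchemeOver sX x) (specOver k L)) : IsRetractRational k X sX := by
  obtain ⟨m, hm, hK⟩ := hY.exists_isLocalRetract hy ρY
  obtain ⟨n, -, hL⟩ := hZ.exists_isLocalRetract hz ρZ
  let e := MvPolynomial.renameEquiv k (finSumFinEquiv (m := n) (n := m))
  exact .of_isLocalRetract (n := n + m) (by lia)
    ((hK.trans_mvPolynomial hL).of_retract e e.symm (by ext; simp [e])) ρX

end RetractRational

section GenericFibre

variable {X Y : Scheme.{u}}

lemma map_genericPoint [IrreducibleSpace X] [IrreducibleSpace Y] (h : X ⟶ Y) [IsDominant h] :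
    h (genericPoint X) = genericPoint Y := by
  refine ((genericPoint_spec X).image h.continuous).eq ?_
  rw [Set.image_univ, h.denseRange.closure_range]
  exact genericPoint_spec Y

lemma mem_of_dense_of_map_eq_genericPoint {α β : Type*} [TopologicalSpace α] [TopologicalSpace β]
    [QuasiSober β] [IrreducibleSpace β] {f : α → β} (hf : Topology.IsInducing f) {a : α}
    (ha : f a = genericPoint β) {U : Opens α} (hU : Dense (U : Set α)) : a ∈ U := by
  have : Nonempty α := ⟨a⟩
  obtain ⟨b, hb⟩ := hU.nonempty
  have hab : a ⤳ b := hf.specializes_iff.mp (ha ▸ genericPoint_specializes (f b))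
  exact hab.mem_open U.2 hb

lemma exists_retract_localSchemeOver_genericFibre [IrreducibleSpace X] [IrreducibleSpace Y]
    (h : X ⟶ Y) {φ : Y.functionField ⟶ X.presheaf.stalk (genericPoint X)}
    (hφ : Spec.map φ ≫ Y.fromSpecStalk (genericPoint Y) = X.fromSpecStalk (genericPoint X) ≫ h) :
    ∃ z : GenericFibre h, (∀ U : (GenericFibre h).Opens, Dense (U : Set (GenericFibre h)) → z ∈ U) ∧
      Nonempty (Retract (Over.mk (Spec.map φ))
        (localSchemeOver (GenericFibre.structMap h) z)) := by
  let p : GenericFibre h ⟶ X := pullback.fst h (Y.fromSpecStalk (genericPoint Y))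
  have : Mono p := inferInstanceAs (Mono (pullback.fst _ _))
  have : IsPreimmersion p := inferInstanceAs (IsPreimmersion (pullback.fst _ _))
  let j : Spec (X.presheaf.stalk (genericPoint X)) ⟶ GenericFibre h :=
    pullback.lift (X.fromSpecStalk (genericPoint X)) (Spec.map φ) hφ.symm
  have hjp : j ≫ p = X.fromSpecStalk (genericPoint X) := pullback.lift_fst _ _ _
  have hj : j ≫ GenericFibre.structMap h = Spec.map φ := pullback.lift_snd _ _ _
  have hpj : p (j (IsLocalRing.closedPoint _)) = genericPoint X :=
    congr($hjp _).trans Scheme.fromSpecStalk_closedPoint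
  exact ⟨j (IsLocalRing.closedPoint _),
    fun U hU ↦ mem_of_dense_of_map_eq_genericPoint p.isEmbedding.isInducing hpj hU,
    hj ▸ nonempty_retract_localSchemeOver_of_mono p (GenericFibre.structMap h) j hjp⟩

end GenericFibre

theorem isRetractRational_of_genericFibre_of_base_general
    (k : Type u) [Field k]
    (X Y : Scheme.{u}) (sX : X ⟶ Spec (CommRingCat.of k)) (sY : Y ⟶ Spec (CommRingCat.of k))
    [IrreducibleSpace X] [LocallyOfFiniteType sX] [IsIntegral Y]
    (h : X ⟶ Y) (hover : h ≫ sY = sX) [IsDominant h]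
    (hfib : IsRetractRational (Y.functionField) (GenericFibre h) (GenericFibre.structMap h))
    (hYrr : IsRetractRational k Y sY) :
    IsRetractRational k X sX := by
  obtain ⟨φ, -, hφ⟩ := exists_specMap_fromSpecStalk (x := genericPoint Y)
    (X.fromSpecStalk (genericPoint X) ≫ h)
    (congr(h $(Scheme.fromSpecStalk_closedPoint)).trans (map_genericPoint h))
  obtain ⟨τ, hτ⟩ := Spec.map_surjective (Y.fromSpecStalk (genericPoint Y) ≫ sY)
  let L : Type u := X.presheaf.stalk (genericPoint X)
  let : Algebra k Y.functionField := τ.hom.toAlgebra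
  let : Algebra Y.functionField L := φ.hom.toAlgebra
  let : Algebra k L := (φ.hom.comp τ.hom).toAlgebra
  have : IsScalarTower k Y.functionField L := .of_algebraMap_eq' rfl
  have hY : localSchemeOver sY (genericPoint Y) = specOver k Y.functionField := by
    rw [localSchemeOver, ← hτ]
    rfl
  have hX : localSchemeOver sX (genericPoint X) = specOver k L := by
    rw [localSchemeOver, ← hover, ← reassoc_of% hφ, ← hτ, ← Spec.map_comp]
    rfl
  obtain ⟨z, hz, ⟨ρ⟩⟩ := exists_retract_localSchemeOver_genericFibre h hφ
  exact hYrr.of_tower (L := L) hfib (fun _ ↦ mem_of_dense_of_map_eq_genericPoint .id rfl) hz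
    (.ofIso (eqToIso hY.symm)) ρ (.ofIso (eqToIso hX))

/-- **Lemma 3 (Schreieder).**  Let `h : X → Y` be a dominant morphism of `k`-varieties
whose generic fibre `X_η` is irreducible.  If `X_η` is retract rational over the function
field `k(Y)` and `Y` is retract rational over `k`, then `X` is retract rational over
`k`. -/
theorem isRetractRational_of_genericFibre_of_base
    (k : Type u) [Field k]
    (X Y : Scheme.{u}) (sX : X ⟶ Spec (CommRingCat.of k)) (sY : Y ⟶ Spec (CommRingCat.of k))
    [IsIntegral X] [LocallyOfFiniteType sX] [QuasiCompact sX] [IsSeparated sX]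
    [IsIntegral Y] [LocallyOfFiniteType sY] [QuasiCompact sY] [IsSeparated sY]
    (h : X ⟶ Y) (hover : h ≫ sY = sX) [IsDominant h]
    [IrreducibleSpace (GenericFibre h)]
    (hfib : IsRetractRational (Y.functionField) (GenericFibre h) (GenericFibre.structMap h))
    (hYrr : IsRetractRational k Y sY) :
    IsRetractRational k X sX :=
  isRetractRational_of_genericFibre_of_base_general k X Y sX sY h hover hfib hYrr
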